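/- arXiv:2306.06538 — 3 statements merged into one kernel-verified Lean document; each statement's English description precedes it below -/
import Mathlib

section
/- Let a < b, let f : [a,b] → ℝ be Lipschitz continuous with Lipschitz constant L > 0, and set D := sup_{x ∈ [a,b]} |f(x)|. If D/(2L) ≤ b − a, then ∫_a^b f(x)² dx ≥ D³/(8L). -/
/-! The supremum `D` of `|f|` is attained at some `x₀`. Since `D / (2L) ≤ b - a`, the interval
`[a, b]` contains an interval of length `D / (2L)` through `x₀`, and on it the Lipschitz bound gives
`|f| ≥ D - L * (D / (2L)) = D / 2`. Hence the integral of `f ^ 2` is at least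
`(D / 2) ^ 2 * (D / (2L)) = D ^ 3 / (8L)`. -/

open MeasureTheory

/-- If `f` is Lipschitz with constant `L > 0` on `[a,b]`, `D` is the sup of `|f|`
over `[a,b]`, and `D/(2L) ≤ b − a`, then `∫_a^b f(x)² dx ≥ D³/(8L)`. -/
theorem stmt8 (a b L : ℝ) (hab : a < b) (hL : 0 < L) (f : ℝ → ℝ)
    (hf : LipschitzOnWith (Real.toNNReal L) f (Set.Icc a b))
    (D : ℝ) (hD : D = sSup ((fun x => |f x|) '' Set.Icc a b))
    (h : D / (2 * L) ≤ b - a) :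
    D ^ 3 / (8 * L) ≤ ∫ x in a..b, (f x) ^ 2 := by
  have hcont : ContinuousOn f (Set.Icc a b) := hf.continuousOn
  obtain ⟨x₀, hx₀, hsup⟩ := isCompact_Icc.exists_sSup_image_eq
    (Set.nonempty_Icc.2 hab.le) hcont.abs
  have hDx : D = |f x₀| := hD.trans hsup
  have hD0 : 0 ≤ D := hDx ▸ abs_nonneg _
  obtain ⟨δ, hδ⟩ : ∃ δ, δ = D / (2 * L) := ⟨_, rfl⟩
  rw [← hδ] at h
  have hδ0 : 0 ≤ δ := by rw [hδ]; positivity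
  have hLδ : L * δ = D / 2 := by rw [hδ]; field_simp
  -- `[c, c + δ]` is the interval of length `δ` ending at `x₀`, shifted right if it would cross `a`.
  obtain ⟨c, hac, hcx, hxc, hcb⟩ : ∃ c, a ≤ c ∧ c ≤ x₀ ∧ x₀ ≤ c + δ ∧ c + δ ≤ b := by
    refine ⟨max a (x₀ - δ), le_max_left _ _, max_le hx₀.1 (by linarith), ?_, ?_⟩
    · linarith [le_max_right a (x₀ - δ)]
    · have : max a (x₀ - δ) ≤ b - δ := max_le (by linarith) (by linarith [hx₀.2])
      linarith
  have hint : IntervalIntegrable (fun x => f x ^ 2) volume a b :=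
    ContinuousOn.intervalIntegrable_of_Icc hab.le (hcont.pow 2)
  have hint' : IntervalIntegrable (fun x => f x ^ 2) volume c (c + δ) :=
    ContinuousOn.intervalIntegrable_of_Icc (by linarith)
      ((hcont.pow 2).mono (Set.Icc_subset_Icc hac hcb))
  have hlow : ∀ x ∈ Set.Icc c (c + δ), (D / 2) ^ 2 ≤ f x ^ 2 := by
    intro x hx
    have hlip := hf.dist_le_mul x₀ hx₀ x ⟨hac.trans hx.1, hx.2.trans hcb⟩
    rw [Real.coe_toNNReal L hL.le, Real.dist_eq, Real.dist_eq] at hlip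
    have hdist : |x₀ - x| ≤ δ := abs_le.2 ⟨by linarith [hx.2], by linarith [hx.1]⟩
    have hmul : L * |x₀ - x| ≤ L * δ := mul_le_mul_of_nonneg_left hdist hL.le
    have htri := abs_sub_abs_le_abs_sub (f x₀) (f x)
    rw [← sq_abs (f x)]
    exact pow_le_pow_left₀ (by linarith) (by linarith) 2
  calc D ^ 3 / (8 * L) = ∫ _x in c..(c + δ), (D / 2) ^ 2 := by
        rw [intervalIntegral.integral_const, smul_eq_mul, add_sub_cancel_left, hδ]
        field_simp
        ring
    _ ≤ ∫ x in c..(c + δ), f x ^ 2 :=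
        intervalIntegral.integral_mono_on (by linarith) intervalIntegrable_const hint' hlow
    _ ≤ ∫ x in a..b, f x ^ 2 :=
        intervalIntegral.integral_mono_interval hac (by linarith) hcb
          (Filter.Eventually.of_forall fun x => sq_nonneg (f x)) hint
end

section
/- Let A ∈ C²(ℝ) be strictly convex (A″ > 0) and let σ be the Rankine–Hugoniot speed associated with A. Let w⁺, w⁻, v ∈ ℝ satisfy w⁺ ≤ v ≤ w⁻. Then |w⁺ − v|·(σ(w⁺,v) − σ(w⁻,w⁺)) − |w⁻ − v|·(σ(w⁻,v) − σ(w⁻,w⁺)) ≤ 0. -/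
/-!
Multiplying a Rankine–Hugoniot speed by the jump gives the flux difference, also for a zero jump.
With `s = σ(w⁻,w⁺)`, the left-hand side is therefore `2 (A v - L v)`, where
`L x = A w⁺ + s (x - w⁺)` is the chord of `A` over `[w⁺, w⁻]`. Convexity puts the graph of `A`
below its chord, so this is nonpositive.
-/

/-- The Rankine–Hugoniot speed associated with a flux `A`. -/
noncomputable def RHspeed (A : ℝ → ℝ) (v w : ℝ) : ℝ :=
  if v = w then deriv A w else (A v - A w) / (v - w)

theorem sub_mul_RHspeed (A : ℝ → ℝ) (v w : ℝ) : (v - w) * RHspeed A v w = A v - A w := by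
  unfold RHspeed
  split_ifs with h
  · simp [h]
  · exact mul_div_cancel₀ _ (sub_ne_zero.mpr h)

/-- For a `C²`, strictly convex flux (`A″ > 0`), if `w⁺ ≤ v ≤ w⁻` then
`|w⁺ − v|·(σ(w⁺,v) − σ(w⁻,w⁺)) − |w⁻ − v|·(σ(w⁻,v) − σ(w⁻,w⁺)) ≤ 0`. -/
theorem stmt10 (A : ℝ → ℝ) (hA : ContDiff ℝ 2 A)
    (hconv : ∀ x, 0 < deriv (deriv A) x)
    (wp wm v : ℝ) (h1 : wp ≤ v) (h2 : v ≤ wm) :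
    |wp - v| * (RHspeed A wp v - RHspeed A wm wp)
      - |wm - v| * (RHspeed A wm v - RHspeed A wm wp) ≤ 0 := by
  have hc : ConvexOn ℝ Set.univ A :=
    (strictConvexOn_univ_of_deriv2_pos hA.continuous fun x => by simpa using hconv x).convexOn
  have e1 := sub_mul_RHspeed A wp v
  have e2 := sub_mul_RHspeed A wm v
  have e3 := sub_mul_RHspeed A wm wp
  rw [abs_of_nonpos (by linarith), abs_of_nonneg (by linarith)]
  -- At the endpoints the chord agrees with `A`; inside, the slopes of secants increase.
  have key : A v - A wp ≤ RHspeed A wm wp * (v - wp) := by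
    rcases h1.eq_or_lt with rfl | h1
    · simp
    rcases h2.eq_or_lt with rfl | h2
    · linarith
    have h := hc.secant_mono (Set.mem_univ wp) (Set.mem_univ v) (Set.mem_univ wm)
      h1.ne' (h1.trans h2).ne' h2.le
    rw [div_le_iff₀ (sub_pos.mpr h1)] at h
    rwa [RHspeed, if_neg (h1.trans h2).ne']
  linarith
end

section
/- Let A ∈ C²(ℝ) be convex (A″ ≥ 0) and let σ be the Rankine–Hugoniot speed associated with A. Let v⁺, v⁻, w⁺, w⁻ ∈ ℝ satisfy v⁺ ≤ v⁻ and w⁺ ≤ w⁻. Then |w⁺ − v⁺|·(σ(w⁺,v⁺) − σ(v⁺,v⁻)) − |w⁻ − v⁻|·(σ(w⁻,v⁻) − σ(v⁺,v⁻)) ≤ 0. -/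
/-- `|w - v| (σ(w, v) - s)` is the signed increment of `x ↦ A x - s x` from `v` to `w`; in
particular the value of `σ` on the diagonal plays no role in it. -/
lemma abs_mul_RHspeed_sub (A : ℝ → ℝ) (v w s : ℝ) :
    |w - v| * (RHspeed A w v - s) = SignType.sign (w - v) * (A w - A v - s * (w - v)) := by
  by_cases h : w = v
  · simp [h]
  · have h' : w - v ≠ 0 := sub_ne_zero.mpr h
    have hs : RHspeed A w v - s = (A w - A v - s * (w - v)) / (w - v) := by
      rw [RHspeed, if_neg h]
      field_simp
    rw [hs]
    nth_rewrite 1 [← sign_mul_self (w - v)]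
    field_simp

/-- A convex function vanishing at `a ≤ b` (with a critical point there if `a = b`) is nonnegative
to the left of `a` and to the right of `b`. -/
lemma ConvexOn.nonneg_outside {g : ℝ → ℝ} (hg : ConvexOn ℝ Set.univ g) {a b : ℝ} (hab : a ≤ b)
    (ha : g a = 0) (hb : g b = 0) (hd : a = b → HasDerivAt g 0 a) :
    (∀ x ≤ a, 0 ≤ g x) ∧ ∀ x, b ≤ x → 0 ≤ g x := by
  rcases hab.eq_or_lt with rfl | hlt
  · have hmin : ∀ x, 0 ≤ g x := by
      intro x
      rcases lt_trichotomy x a with h | rfl | h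
      · have := hg.slope_le_of_hasDerivAt (Set.mem_univ x) (Set.mem_univ a) h (hd rfl)
        rw [slope_def_field, ha, div_le_iff₀ (by linarith)] at this
        linarith
      · exact ha.ge
      · have := hg.le_slope_of_hasDerivAt (Set.mem_univ a) (Set.mem_univ x) h (hd rfl)
        rw [slope_def_field, ha, le_div_iff₀ (by linarith)] at this
        linarith
    exact ⟨fun x _ => hmin x, fun x _ => hmin x⟩
  · refine ⟨fun x hx => ?_, fun x hx => ?_⟩
    · rcases hx.eq_or_lt with rfl | hx
      · exact ha.ge
      · have := hg.slope_mono_adjacent (Set.mem_univ x) (Set.mem_univ b) hx hlt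
        rw [ha, hb, sub_zero, zero_div, div_le_iff₀ (by linarith)] at this
        linarith
    · rcases hx.eq_or_lt with rfl | hx
      · exact hb.ge
      · have := hg.slope_mono_adjacent (Set.mem_univ a) (Set.mem_univ x) hlt hx
        rw [ha, hb, sub_zero, zero_div, le_div_iff₀ (by linarith)] at this
        linarith

/-- A convex function that does not decrease from `b` to `x > b` does not decrease afterwards. -/
lemma ConvexOn.le_of_right {g : ℝ → ℝ} (hg : ConvexOn ℝ Set.univ g) {b x y : ℝ} (hbx : b < x)
    (hx : g b ≤ g x) (hxy : x ≤ y) : g x ≤ g y := by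
  rcases hxy.eq_or_lt with rfl | hxy
  · exact le_rfl
  · have := hg.slope_mono_adjacent (Set.mem_univ b) (Set.mem_univ y) hbx hxy
    have h0 : 0 ≤ (g x - g b) / (x - b) := div_nonneg (by linarith) (by linarith)
    have h1 := h0.trans this
    rw [le_div_iff₀ (by linarith)] at h1
    linarith

/-- Mirror image of `ConvexOn.le_of_right`. -/
lemma ConvexOn.le_of_left {g : ℝ → ℝ} (hg : ConvexOn ℝ Set.univ g) {a x y : ℝ} (hya : y < a)
    (hy : g a ≤ g y) (hxy : x ≤ y) : g y ≤ g x := by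
  rcases hxy.eq_or_lt with rfl | hxy
  · exact le_rfl
  · have := hg.slope_mono_adjacent (Set.mem_univ x) (Set.mem_univ a) hxy hya
    have h0 : (g a - g y) / (a - y) ≤ 0 := div_nonpos_of_nonpos_of_nonneg (by linarith) (by linarith)
    have h1 := this.trans h0
    rw [div_le_iff₀ (by linarith)] at h1
    linarith

/-- The inequality for the normalized flux `g`. -/
lemma ConvexOn.sign_mul_le {g : ℝ → ℝ} (hg : ConvexOn ℝ Set.univ g) {a b x y : ℝ} (hab : a ≤ b)
    (ha : g a = 0) (hb : g b = 0) (hd : a = b → HasDerivAt g 0 a) (hxy : x ≤ y) :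
    (SignType.sign (x - a) : ℝ) * g x ≤ SignType.sign (y - b) * g y := by
  obtain ⟨hl, hr⟩ := hg.nonneg_outside hab ha hb hd
  have hin : ∀ z, a ≤ z → z ≤ b → g z ≤ 0 := fun z h1 h2 => by
    have := hg.le_max_of_mem_Icc (Set.mem_univ a) (Set.mem_univ b) ⟨h1, h2⟩
    simpa [ha, hb] using this
  by_cases hbx : b < x
  · have h1 := hg.le_of_right hbx (hb.trans_le (hr x hbx.le)) hxy
    rw [sign_pos (by linarith), sign_pos (by linarith)]
    simpa using h1
  by_cases hya : y < a
  · have h1 := hg.le_of_left hya (ha.trans_le (hl y hya.le)) hxy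
    rw [sign_neg (by linarith), sign_neg (by linarith)]
    simpa using h1
  push Not at hbx hya
  have hL : (SignType.sign (x - a) : ℝ) * g x ≤ 0 := by
    rcases lt_trichotomy x a with h | rfl | h
    · rw [sign_neg (by linarith)]
      simpa using hl x h.le
    · simp
    · rw [sign_pos (by linarith)]
      simpa using hin x h.le hbx
  have hR : 0 ≤ (SignType.sign (y - b) : ℝ) * g y := by
    rcases lt_trichotomy y b with h | rfl | h
    · rw [sign_neg (by linarith)]
      simpa using hin y hya h.le
    · simp
    · rw [sign_pos (by linarith)]
      simpa using hr y h.le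
  exact hL.trans hR

/-- For a `C²`, convex flux (`A″ ≥ 0`), if `v⁺ ≤ v⁻` and `w⁺ ≤ w⁻` then
`|w⁺ − v⁺|·(σ(w⁺,v⁺) − σ(v⁺,v⁻)) − |w⁻ − v⁻|·(σ(w⁻,v⁻) − σ(v⁺,v⁻)) ≤ 0`. -/
theorem stmt11 (A : ℝ → ℝ) (hA : ContDiff ℝ 2 A)
    (hconv : ∀ x, 0 ≤ deriv (deriv A) x)
    (vp vm wp wm : ℝ) (hv : vp ≤ vm) (hw : wp ≤ wm) :
    |wp - vp| * (RHspeed A wp vp - RHspeed A vp vm)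
      - |wm - vm| * (RHspeed A wm vm - RHspeed A vp vm) ≤ 0 := by
  have hdA : Differentiable ℝ A := hA.differentiable (by norm_num)
  have hdA' : Differentiable ℝ (deriv A) := (hA.iterate_deriv' 1 1).differentiable (by norm_num)
  have hAconv : ConvexOn ℝ Set.univ A :=
    convexOn_univ_of_deriv2_nonneg hdA hdA' hconv
  set s := RHspeed A vp vm with hs
  have hvm : A vm - A vp = s * (vm - vp) := by
    by_cases h : vp = vm
    · simp [h]
    · have h' : vp - vm ≠ 0 := sub_ne_zero.mpr h
      rw [hs, RHspeed, if_neg h]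
      field_simp
      ring
  have hg : ConvexOn ℝ Set.univ (fun x => A x - A vp - s * (x - vp)) := by
    refine ⟨convex_univ, fun x _ y _ p q hp hq hpq => ?_⟩
    have h := hAconv.2 (Set.mem_univ x) (Set.mem_univ y) hp hq hpq
    simp only [smul_eq_mul] at h ⊢
    obtain rfl : q = 1 - p := by linarith
    linarith
  have hd : vp = vm → HasDerivAt (fun x => A x - A vp - s * (x - vp)) 0 vp := by
    intro h
    have hsd : s = deriv A vp := by rw [hs, RHspeed, if_pos h, h]
    have h1 := ((hdA vp).hasDerivAt.sub_const (A vp)).sub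
      (((hasDerivAt_id vp).sub_const vp).const_mul s)
    have h0 : deriv A vp - s * 1 = 0 := by rw [hsd]; ring
    rw [h0] at h1
    exact h1
  have key := hg.sign_mul_le hv (by simp) (by linarith) hd hw
  -- Both base points give the same normalized flux, because it vanishes at `vm` too.
  have hsame : A wm - A vm - s * (wm - vm) = A wm - A vp - s * (wm - vp) := by linarith
  rw [abs_mul_RHspeed_sub, abs_mul_RHspeed_sub, hsame]
  exact sub_nonpos.mpr key
end
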